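/- Let n ≥ 2 and 1 ≤ g ≤ n−1. Let P ⊆ ℝ^n be the convex hull of a finite set, with nonempty interior, and let U ⊆ ℝ^n be a linear subspace of dimension n−g with P ∩ U ≠ ∅. Assume the following genericity condition: for every face Q of P with Q ∩ U ≠ ∅, the relative interior of Q meets U and the direction of the affine span of Q together with U spans ℝ^n. Then P ∩ U is a polytope of dimension n−g, and the map F ↦ F ∩ U is a bijection from the set of facets F of P with F ∩ U ≠ ∅ onto the set of facets of P ∩ U. -/

import Mathlib

open scoped RealInnerProductSpace

/-- A (nonempty, exposed) face of a convex set `C ⊆ ℝ^n`: a nonempty set of the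
form `{x ∈ C | ⟨x, φ⟩ = sup_{y ∈ C} ⟨y, φ⟩}` for some `φ ∈ ℝ^n`.  Taking `φ = 0`
shows that `C` itself is a face. -/
def IsFaceOf {n : ℕ} (C F : Set (EuclideanSpace ℝ (Fin n))) : Prop :=
  F.Nonempty ∧ ∃ φ : EuclideanSpace ℝ (Fin n),
    F = {x ∈ C | ⟪x, φ⟫ = sSup ((fun y => ⟪y, φ⟫) '' C)}

/-- The dimension of a subset of `ℝ^n`: the dimension of the direction of its
affine span. -/
noncomputable def setDim {n : ℕ} (s : Set (EuclideanSpace ℝ (Fin n))) : ℕ :=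
  Module.finrank ℝ (affineSpan ℝ s).direction

open Module Set Topology

/-!
Transversality to an affine subspace `A` of `E` gives `dim (Q ∩ A) = dim Q + dim A - dim E` for
every face `Q` of `P` that meets `A`, so passing to `Q ∩ A` preserves codimension. An exposed face
containing a relative interior point of `F` contains `F`, so a facet is recovered from its slice.
Conversely a facet `G` of `P ∩ A` misses the interior of `P`; separating the two gives a proper face
`Q` of `P` with `G ⊆ Q ∩ A`, and counting dimensions forces equality. The slice is a polytope
because each of its extreme points is determined by the set of vertices supporting it.
-/

section IntrinsicCore

variable {E : Type*} [AddCommGroup E] [Module ℝ E] {s C F : Set E} {z : E}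

/-- The intrinsic core (algebraic relative interior) of `s`: the points `z` of `s` such that every
segment of `s` ending at `z` can be prolonged beyond `z` inside `s`. It serves as a topology-free
substitute for the relative interior. -/
def intrinsicCore (s : Set E) : Set E :=
  {z ∈ s | ∀ y ∈ s, ∃ ε : ℝ, 0 < ε ∧ z + ε • (z - y) ∈ s}

lemma intrinsicCore_inter_affineSubspace_subset (s : Set E) (A : AffineSubspace ℝ E) :
    intrinsicCore s ∩ A ⊆ intrinsicCore (s ∩ A) := by
  rintro z ⟨⟨hzs, hz⟩, hzA⟩
  refine ⟨⟨hzs, hzA⟩, fun y ⟨hys, hyA⟩ => ?_⟩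
  obtain ⟨ε, hε, hmem⟩ := hz y hys
  refine ⟨ε, hε, hmem, ?_⟩
  rw [add_comm]
  exact A.smul_vsub_vadd_mem ε hzA hyA hzA

lemma subset_of_isExtreme_of_mem_intrinsicCore (hF : IsExtreme ℝ C F) (hsC : s ⊆ C)
    (hz : z ∈ intrinsicCore s) (hzF : z ∈ F) : s ⊆ F := by
  intro y hy
  obtain ⟨ε, hε, hmem⟩ := hz.2 y hy
  refine hF.left_mem_of_mem_openSegment (hsC hy) (hsC hmem) hzF
    ⟨ε / (1 + ε), 1 / (1 + ε), by positivity, by positivity, by field_simp; ring, ?_⟩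
  match_scalars <;> field_simp; ring

lemma sum_smul_mem_intrinsicCore_convexHull {T : Finset E} {w : E → ℝ} (hw : ∀ y ∈ T, 0 < w y)
    (hsum : ∑ y ∈ T, w y = 1) : ∑ y ∈ T, w y • y ∈ intrinsicCore (convexHull ℝ (T : Set E)) := by
  refine ⟨Finset.mem_convexHull'.2 ⟨w, fun y hy => (hw y hy).le, hsum, rfl⟩, fun x hx => ?_⟩
  obtain ⟨v, -, hv1, rfl⟩ := Finset.mem_convexHull'.1 hx
  have hev : ∀ᶠ ε in 𝓝[>] (0 : ℝ), ∀ y ∈ T, 0 < w y + ε * (w y - v y) := by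
    refine nhdsWithin_le_nhds ((Filter.eventually_all_finset T).2 fun y hy => ?_)
    have hcont : Continuous fun ε : ℝ => w y + ε * (w y - v y) := by fun_prop
    exact hcont.continuousAt.eventually (lt_mem_nhds (by simpa using hw y hy))
  obtain ⟨ε, hpos, hε⟩ := (hev.and self_mem_nhdsWithin).exists
  refine ⟨ε, hε, Finset.mem_convexHull'.2
    ⟨fun y => w y + ε * (w y - v y), fun y hy => (hpos y hy).le, ?_, ?_⟩⟩
  · rw [Finset.sum_add_distrib, ← Finset.mul_sum, Finset.sum_sub_distrib, hsum, hv1]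
    ring
  · simp only [add_smul, mul_smul, sub_smul, Finset.sum_add_distrib, ← Finset.smul_sum,
      Finset.sum_sub_distrib]

lemma exists_subset_mem_intrinsicCore_convexHull {S : Finset E} {x : E}
    (hx : x ∈ convexHull ℝ (S : Set E)) :
    ∃ T ⊆ S, x ∈ intrinsicCore (convexHull ℝ (T : Set E)) := by
  classical
  obtain ⟨w, hw0, hw1, rfl⟩ := Finset.mem_convexHull'.1 hx
  refine ⟨S.filter (w · ≠ 0), S.filter_subset _, ?_⟩
  rw [← Finset.sum_filter_of_ne (p := (w · ≠ 0)) fun y _ h => left_ne_zero_of_smul h]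
  refine sum_smul_mem_intrinsicCore_convexHull (fun y hy => ?_) ?_
  · rw [Finset.mem_filter] at hy
    exact (hw0 y hy.1).lt_of_ne' hy.2
  · rwa [Finset.sum_filter_ne_zero]

lemma finite_extremePoints_convexHull_inter (S : Finset E) (A : AffineSubspace ℝ E) :
    ((convexHull ℝ (S : Set E) ∩ A).extremePoints ℝ).Finite := by
  -- An extreme point is the only point of `A` in the hull of its support, a subset of `S`.
  refine Finite.of_finite_image (f := singleton) ?_ singleton_injective.injOn
  refine (S.powerset.finite_toSet.image fun T : Finset E => convexHull ℝ (T : Set E) ∩ A).subset ?_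
  rintro _ ⟨x, hx, rfl⟩
  obtain ⟨T, hTS, hxT⟩ := exists_subset_mem_intrinsicCore_convexHull hx.1.1
  have hxTA := intrinsicCore_inter_affineSubspace_subset _ A ⟨hxT, hx.1.2⟩
  refine ⟨T, Finset.mem_coe.2 (Finset.mem_powerset.2 hTS), Subset.antisymm ?_ ?_⟩
  · exact subset_of_isExtreme_of_mem_intrinsicCore (isExtreme_singleton.2 hx)
      (inter_subset_inter_left _ (convexHull_mono (Finset.coe_subset.2 hTS))) hxTA rfl
  · exact singleton_subset_iff.2 hxTA.1

lemma exists_finset_convexHull_inter_eq_convexHull [TopologicalSpace E] [IsTopologicalAddGroup E]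
    [ContinuousSMul ℝ E] [LocallyConvexSpace ℝ E] [T2Space E] (S : Finset E)
    {A : AffineSubspace ℝ E} (hA : IsClosed (A : Set E)) :
    ∃ t : Finset E, convexHull ℝ (S : Set E) ∩ A = convexHull ℝ (t : Set E) := by
  have hfin := finite_extremePoints_convexHull_inter S A
  have hcompact : IsCompact (convexHull ℝ (S : Set E) ∩ A) :=
    (S.finite_toSet.isCompact_convexHull ℝ).inter_right hA
  refine ⟨hfin.toFinset, ?_⟩
  rw [hfin.coe_toFinset, ← (hfin.isClosed_convexHull ℝ).closure_eq,
    closure_convexHull_extremePoints hcompact ((convex_convexHull ℝ _).inter A.convex)]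

end IntrinsicCore

section Faces

variable {E : Type*} [AddCommGroup E] [Module ℝ E] [TopologicalSpace E]
  {C F P Q : Set E} {A : AffineSubspace ℝ E} {z v : E}

lemma isExposed_inter_inter (hF : IsExposed ℝ C F) (D : Set E) :
    IsExposed ℝ (C ∩ D) (F ∩ D) := by
  rintro ⟨w, hwF, hwD⟩
  obtain ⟨l, rfl⟩ := hF ⟨w, hwF⟩
  refine ⟨l, Subset.antisymm ?_ ?_⟩
  · exact fun x ⟨⟨hxC, hx⟩, hxD⟩ => ⟨⟨hxC, hxD⟩, fun y hy => hx y hy.1⟩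
  · exact fun x ⟨⟨hxC, hxD⟩, hx⟩ =>
      ⟨⟨hxC, fun y hy => (hwF.2 y hy).trans (hx w ⟨hwF.1, hwD⟩)⟩, hxD⟩

lemma vectorSpan_lt_of_isExposed (hF : IsExposed ℝ C F) (hne : F.Nonempty) (hFC : F ≠ C) :
    vectorSpan ℝ F < vectorSpan ℝ C := by
  refine (vectorSpan_mono ℝ hF.subset).lt_of_not_ge fun hle => hFC (hF.subset.antisymm ?_)
  obtain ⟨f, hf⟩ := hne
  obtain ⟨l, rfl⟩ := hF ⟨f, hf⟩
  have hker : vectorSpan ℝ {x ∈ C | ∀ y ∈ C, l y ≤ l x} ≤ LinearMap.ker l.toLinearMap := by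
    refine Submodule.span_le.2 ?_
    rintro _ ⟨a, ha, b, hb, rfl⟩
    simpa [sub_eq_zero] using le_antisymm (hb.2 a ha.1) (ha.2 b hb.1)
  intro x hx
  have hlx : l x = l f := by
    simpa [sub_eq_zero] using hker (hle (vsub_mem_vectorSpan ℝ hx hf.1))
  exact ⟨hx, fun y hy => hlx ▸ hf.2 y hy⟩

/-- Facets of a convex set `C`: nonempty exposed faces of codimension one in `C`. -/
def IsFacet (C F : Set E) : Prop :=
  F.Nonempty ∧ IsExposed ℝ C F ∧ finrank ℝ (vectorSpan ℝ F) + 1 = finrank ℝ (vectorSpan ℝ C)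

/-- `Q` meets the affine subspace `A` transversally through its relative interior. Genericity of a
linearization says that all faces of the polytope that meet `A` have this property. -/
def IsTransverse (Q : Set E) (A : AffineSubspace ℝ E) : Prop :=
  (intrinsicInterior ℝ Q ∩ A).Nonempty ∧ vectorSpan ℝ Q ⊔ A.direction = ⊤

variable [IsTopologicalAddGroup E] [ContinuousSMul ℝ E]

lemma exists_pos_add_smul_mem_of_mem_intrinsicInterior (hz : z ∈ intrinsicInterior ℝ Q)
    (hv : v ∈ vectorSpan ℝ Q) : ∃ ε : ℝ, 0 < ε ∧ z + ε • v ∈ Q := by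
  obtain ⟨y, hy, rfl⟩ := mem_intrinsicInterior.1 hz
  have hmem (t : ℝ) : (y : E) + t • v ∈ affineSpan ℝ Q := by
    rw [add_comm]
    exact AffineSubspace.vadd_mem_of_mem_direction
      (by rw [direction_affineSpan]; exact Submodule.smul_mem _ t hv) y.2
  let line : ℝ → affineSpan ℝ Q := fun t => ⟨y + t • v, hmem t⟩
  have hline : Continuous line := by fun_prop
  have hline0 : line 0 = y := by simp [line]
  have hev : ∀ᶠ t in 𝓝[>] (0 : ℝ), line t ∈ ((↑) ⁻¹' Q : Set (affineSpan ℝ Q)) :=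
    nhdsWithin_le_nhds <| hline.continuousAt.eventually_mem <| by
      rw [hline0]
      exact mem_interior_iff_mem_nhds.1 hy
  obtain ⟨ε, hε, hpos⟩ := (hev.and self_mem_nhdsWithin).exists
  exact ⟨ε, hpos, hε⟩

lemma intrinsicInterior_subset_intrinsicCore (Q : Set E) :
    intrinsicInterior ℝ Q ⊆ intrinsicCore Q := fun _ hz =>
  ⟨intrinsicInterior_subset hz, fun _ hy => exists_pos_add_smul_mem_of_mem_intrinsicInterior hz
    (vsub_mem_vectorSpan ℝ (intrinsicInterior_subset hz) hy)⟩

lemma vectorSpan_inter_affineSubspace (h : (intrinsicInterior ℝ Q ∩ A).Nonempty) :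
    vectorSpan ℝ (Q ∩ A) = vectorSpan ℝ Q ⊓ A.direction := by
  refine le_antisymm (le_inf (vectorSpan_mono ℝ inter_subset_left)
    (vectorSpan_mono ℝ inter_subset_right)) ?_
  obtain ⟨z, hz, hzA⟩ := h
  rintro v ⟨hvQ, hvA⟩
  obtain ⟨ε, hε, hmem⟩ := exists_pos_add_smul_mem_of_mem_intrinsicInterior hz hvQ
  have hmemA : z + ε • v ∈ A := by
    rw [add_comm]
    exact AffineSubspace.vadd_mem_of_mem_direction (Submodule.smul_mem _ ε hvA) hzA
  have hsmul : (z + ε • v) -ᵥ z ∈ vectorSpan ℝ (Q ∩ A) :=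
    vsub_mem_vectorSpan ℝ ⟨hmem, hmemA⟩ ⟨intrinsicInterior_subset hz, hzA⟩
  rw [vsub_eq_sub, add_sub_cancel_left] at hsmul
  exact (Submodule.smul_mem_iff _ hε.ne').1 hsmul

lemma exists_isExposed_ne_of_disjoint_interior (hC : Convex ℝ C) (hint : (interior C).Nonempty)
    (hF : Convex ℝ F) (hFC : F ⊆ C) (hne : F.Nonempty) (hdisj : Disjoint (interior C) F) :
    ∃ Q, IsExposed ℝ C Q ∧ F ⊆ Q ∧ Q ≠ C := by
  obtain ⟨l, u, hlt, hle⟩ := geometric_hahn_banach_open hC.interior isOpen_interior hF hdisj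
  have hCu : ∀ y ∈ C, l y ≤ u := by
    have hcl : closure (interior C) ⊆ {y | l y ≤ u} :=
      closure_minimal (fun y hy => (hlt y hy).le) (isClosed_le l.continuous continuous_const)
    rw [hC.closure_interior_eq_closure_of_nonempty_interior hint] at hcl
    exact fun y hy => hcl (subset_closure hy)
  refine ⟨l.toExposed C, ContinuousLinearMap.toExposed.isExposed,
    fun x hx => ⟨hFC hx, fun y hy => (hCu y hy).trans (hle x hx)⟩, fun hQ => ?_⟩
  obtain ⟨p, hp⟩ := hint
  obtain ⟨f, hf⟩ := hne
  have hpQ : p ∈ l.toExposed C := hQ.symm ▸ (interior_subset hp : p ∈ C)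
  exact ((hpQ.2 f (hFC hf)).trans_lt (hlt p hp)).not_ge (hle f hf)

lemma subset_of_isExposed_of_inter_subset {F₁ F₂ : Set E} (h₁ : F₁ ⊆ P) (h₂ : IsExposed ℝ P F₂)
    (hA : (intrinsicInterior ℝ F₁ ∩ A).Nonempty) (hsub : F₁ ∩ A ⊆ F₂) : F₁ ⊆ F₂ := by
  obtain ⟨z, hz, hzA⟩ := hA
  exact subset_of_isExtreme_of_mem_intrinsicCore h₂.isExtreme h₁
    (intrinsicInterior_subset_intrinsicCore F₁ hz) (hsub ⟨intrinsicInterior_subset hz, hzA⟩)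

lemma disjoint_interior_of_isExposed_inter (hF : IsExposed ℝ (P ∩ A) F) (hne : F ≠ P ∩ A) :
    Disjoint (interior P) F := by
  refine Set.disjoint_left.2 fun x hxP hxF => hne (hF.subset.antisymm ?_)
  refine subset_of_isExtreme_of_mem_intrinsicCore hF.isExtreme Subset.rfl ?_ hxF
  exact intrinsicCore_inter_affineSubspace_subset P A
    ⟨intrinsicInterior_subset_intrinsicCore P (interior_subset_intrinsicInterior hxP),
      (hF.subset hxF).2⟩

variable [FiniteDimensional ℝ E]

lemma finrank_vectorSpan_inter_add (h : IsTransverse Q A) :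
    finrank ℝ (vectorSpan ℝ (Q ∩ A)) + finrank ℝ E =
      finrank ℝ (vectorSpan ℝ Q) + finrank ℝ A.direction := by
  rw [vectorSpan_inter_affineSubspace h.1, add_comm, ← Submodule.finrank_sup_add_finrank_inf_eq,
    h.2, finrank_top]

lemma isFacet_inter_iff (hF : IsExposed ℝ P F) (hP : IsTransverse P A) (hFA : IsTransverse F A) :
    IsFacet (P ∩ A) (F ∩ A) ↔ IsFacet P F := by
  have hne : (F ∩ A).Nonempty := hFA.1.mono (inter_subset_inter_left _ intrinsicInterior_subset)
  have hdimP := finrank_vectorSpan_inter_add hP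
  have hdimF := finrank_vectorSpan_inter_add hFA
  simp only [IsFacet, hne, hne.left, hF, isExposed_inter_inter hF, true_and]
  lia

lemma exists_isExposed_inter_eq_of_isFacet_inter (hP : Convex ℝ P) (hint : (interior P).Nonempty)
    (hgen : ∀ Q, IsExposed ℝ P Q → (Q ∩ A).Nonempty → IsTransverse Q A)
    (hF : IsFacet (P ∩ A) F) : ∃ Q, IsExposed ℝ P Q ∧ Q ∩ A = F := by
  obtain ⟨hne, hexp, hdim⟩ := hF
  have hPF : F ≠ P ∩ A := by
    rintro rfl
    lia
  obtain ⟨Q, hQ, hFQ, hQP⟩ := exists_isExposed_ne_of_disjoint_interior hP hint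
    (hexp.convex (hP.inter A.convex)) (hexp.subset.trans inter_subset_left) hne
    (disjoint_interior_of_isExposed_inter hexp hPF)
  have hFQA : F ⊆ Q ∩ A := subset_inter hFQ (hexp.subset.trans inter_subset_right)
  refine ⟨Q, hQ, by_contra fun hQF => ?_⟩
  -- Otherwise `F ⊂ Q ∩ A ⊂ P ∩ A` is a chain of faces whose dimensions strictly increase.
  have hFlt : finrank ℝ (vectorSpan ℝ F) < finrank ℝ (vectorSpan ℝ (Q ∩ A)) :=
    Submodule.finrank_lt_finrank_of_lt <| vectorSpan_lt_of_isExposed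
      (hexp.mono (inter_subset_inter_left _ hQ.subset) hFQA) hne (Ne.symm hQF)
  have hQlt : finrank ℝ (vectorSpan ℝ Q) < finrank ℝ (vectorSpan ℝ P) :=
    Submodule.finrank_lt_finrank_of_lt <| vectorSpan_lt_of_isExposed hQ (hne.mono hFQ) hQP
  have hdimP := finrank_vectorSpan_inter_add
    (hgen P (IsExposed.refl P) (hne.mono hexp.subset))
  have hdimQ := finrank_vectorSpan_inter_add (hgen Q hQ (hne.mono hFQA))
  lia

theorem bijOn_inter_isFacet (hP : Convex ℝ P) (hint : (interior P).Nonempty)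
    (hgen : ∀ Q, IsExposed ℝ P Q → (Q ∩ A).Nonempty → IsTransverse Q A) :
    BijOn (· ∩ (A : Set E)) {F | IsFacet P F ∧ (F ∩ A).Nonempty} {F | IsFacet (P ∩ A) F} := by
  have hPA {F : Set E} (hF : IsExposed ℝ P F) (hFA : (F ∩ A).Nonempty) : IsTransverse P A :=
    hgen P (IsExposed.refl P) (hFA.mono (inter_subset_inter_left _ hF.subset))
  refine ⟨?mapsTo, ?injOn, ?surjOn⟩
  case mapsTo =>
    rintro F ⟨hF, hFA⟩
    exact (isFacet_inter_iff hF.2.1 (hPA hF.2.1 hFA) (hgen F hF.2.1 hFA)).2 hF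
  case injOn =>
    rintro F₁ ⟨⟨-, h₁, -⟩, hA₁⟩ F₂ ⟨⟨-, h₂, -⟩, hA₂⟩ (heq : F₁ ∩ A = F₂ ∩ A)
    exact Subset.antisymm
      (subset_of_isExposed_of_inter_subset h₁.subset h₂ (hgen F₁ h₁ hA₁).1
        (heq.subset.trans inter_subset_left))
      (subset_of_isExposed_of_inter_subset h₂.subset h₁ (hgen F₂ h₂ hA₂).1
        (heq.superset.trans inter_subset_left))
  case surjOn =>
    intro F hF
    obtain ⟨Q, hQ, rfl⟩ := exists_isExposed_inter_eq_of_isFacet_inter hP hint hgen hF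
    exact ⟨Q, ⟨(isFacet_inter_iff hQ (hPA hQ hF.1) (hgen Q hQ hF.1)).1 hF, hF.1⟩, rfl⟩

end Faces

section Euclidean

variable {n : ℕ} {C F P : Set (EuclideanSpace ℝ (Fin n))}

lemma setDim_eq_finrank_vectorSpan (s : Set (EuclideanSpace ℝ (Fin n))) :
    setDim s = finrank ℝ (vectorSpan ℝ s) := by
  rw [setDim, direction_affineSpan]

-- Boundedness of `C` keeps `sSup` in `IsFaceOf` from taking its junk value.
lemma isFaceOf_iff_isExposed (hC : Bornology.IsBounded C) :
    IsFaceOf C F ↔ F.Nonempty ∧ IsExposed ℝ C F := by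
  have hface (φ : EuclideanSpace ℝ (Fin n)) :
      {x ∈ C | ⟪x, φ⟫ = sSup ((fun y => ⟪y, φ⟫) '' C)} =
        {x ∈ C | ∀ y ∈ C, innerSL ℝ φ y ≤ innerSL ℝ φ x} := by
    have hbdd : BddAbove ((fun y => ⟪y, φ⟫) '' C) := by
      simp_rw [real_inner_comm φ]
      exact ((innerSL ℝ φ).lipschitz.isBounded_image hC).bddAbove
    ext x
    simp only [mem_ofPred_eq, innerSL_apply_apply, real_inner_comm _ φ]
    refine and_congr_right fun hx => ⟨fun h y hy => ?_, fun h => ?_⟩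
    · exact h ▸ le_csSup hbdd (mem_image_of_mem _ hy)
    · have hgreatest : IsGreatest ((fun y => ⟪y, φ⟫) '' C) ⟪x, φ⟫ :=
        ⟨mem_image_of_mem _ hx, forall_mem_image.2 h⟩
      exact hgreatest.csSup_eq.symm
  refine and_congr_right fun hne => ?_
  simp only [hface, IsExposed, hne, true_imp_iff]
  exact ((InnerProductSpace.toDual ℝ (EuclideanSpace ℝ (Fin n))).surjective.exists
    (p := fun l => F = {x ∈ C | ∀ y ∈ C, l y ≤ l x})).symm

lemma isFacet_iff_isFaceOf (hC : Bornology.IsBounded C) (hdim : 0 < setDim C) :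
    IsFacet C F ↔ IsFaceOf C F ∧ setDim F = setDim C - 1 := by
  simp only [IsFacet, isFaceOf_iff_isExposed hC, setDim_eq_finrank_vectorSpan, and_assoc] at hdim ⊢
  refine and_congr_right fun _ => and_congr_right fun _ => ?_
  omega

lemma setDim_eq_of_nonempty_interior (hint : (interior P).Nonempty) : setDim P = n := by
  have hspan : affineSpan ℝ P = ⊤ :=
    top_le_iff.1 ((isOpen_interior.affineSpan_eq_top hint).ge.trans
      (affineSpan_mono ℝ interior_subset))
  rw [setDim, hspan, AffineSubspace.direction_top, finrank_top, finrank_euclideanSpace_fin]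

theorem stmt7_general {d : ℕ} (hP : Convex ℝ P) (hbdd : Bornology.IsBounded P)
    (hint : (interior P).Nonempty) (A : AffineSubspace ℝ (EuclideanSpace ℝ (Fin n)))
    (hA : finrank ℝ A.direction = d) (hd : 0 < d) (hPA : (P ∩ A).Nonempty)
    (hgen : ∀ Q, IsFaceOf P Q → (Q ∩ A).Nonempty →
      (intrinsicInterior ℝ Q ∩ A).Nonempty ∧ (affineSpan ℝ Q).direction ⊔ A.direction = ⊤) :
    setDim (P ∩ A) = d ∧
      BijOn (fun F => F ∩ (A : Set (EuclideanSpace ℝ (Fin n))))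
        {F | IsFaceOf P F ∧ setDim F = n - 1 ∧ (F ∩ A).Nonempty}
        {F | IsFaceOf (P ∩ A) F ∧ setDim F = d - 1} := by
  have htrans : ∀ Q, IsExposed ℝ P Q → (Q ∩ A).Nonempty → IsTransverse Q A := by
    intro Q hQ hQA
    simpa only [IsTransverse, direction_affineSpan] using
      hgen Q ((isFaceOf_iff_isExposed hbdd).2 ⟨hQA.left, hQ⟩) hQA
  have hdimP : setDim P = n := setDim_eq_of_nonempty_interior hint
  have hdimPA : setDim (P ∩ A) = d := by
    have hadd := finrank_vectorSpan_inter_add (htrans P (IsExposed.refl P) hPA)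
    rw [← setDim_eq_finrank_vectorSpan, ← setDim_eq_finrank_vectorSpan, hdimP,
      finrank_euclideanSpace_fin, hA] at hadd
    omega
  have hn : 0 < n := hd.trans_le <| by simpa [hA] using A.direction.finrank_le
  refine ⟨hdimPA, ?_⟩
  have hbij := bijOn_inter_isFacet hP hint htrans
  simpa only [isFacet_iff_isFaceOf hbdd (hn.trans_eq hdimP.symm),
    isFacet_iff_isFaceOf (hbdd.subset inter_subset_left) (hd.trans_eq hdimPA.symm), hdimP, hdimPA,
    and_assoc] using hbij

end Euclidean

/-- Lemma 3.2(ii) of the paper: if every face `Q` of the polytope `P` meeting the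
subspace `U` does so transversally through its relative interior, then `P ∩ U` is
a polytope of dimension `n - g`, and `F ↦ F ∩ U` is a bijection from the facets of
`P` meeting `U` onto the facets of `P ∩ U`. -/
theorem stmt7 (n g : ℕ) (hn : 2 ≤ n) (hg1 : 1 ≤ g) (hg2 : g ≤ n - 1)
    (S : Finset (EuclideanSpace ℝ (Fin n)))
    (P : Set (EuclideanSpace ℝ (Fin n)))
    (hP : P = convexHull ℝ (S : Set (EuclideanSpace ℝ (Fin n))))
    (hint : (interior P).Nonempty)
    (U : Submodule ℝ (EuclideanSpace ℝ (Fin n)))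
    (hU : Module.finrank ℝ U = n - g)
    (hPU : (P ∩ (U : Set (EuclideanSpace ℝ (Fin n)))).Nonempty)
    (hgen : ∀ Q : Set (EuclideanSpace ℝ (Fin n)), IsFaceOf P Q →
      (Q ∩ (U : Set (EuclideanSpace ℝ (Fin n)))).Nonempty →
        (intrinsicInterior ℝ Q ∩ (U : Set (EuclideanSpace ℝ (Fin n)))).Nonempty ∧
          (affineSpan ℝ Q).direction ⊔ U = ⊤) :
    (∃ t : Finset (EuclideanSpace ℝ (Fin n)),
        P ∩ (U : Set (EuclideanSpace ℝ (Fin n)))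
          = convexHull ℝ (t : Set (EuclideanSpace ℝ (Fin n)))) ∧
      setDim (P ∩ (U : Set (EuclideanSpace ℝ (Fin n)))) = n - g ∧
      Set.BijOn (fun F => F ∩ (U : Set (EuclideanSpace ℝ (Fin n))))
        {F | IsFaceOf P F ∧ setDim F = n - 1 ∧
          (F ∩ (U : Set (EuclideanSpace ℝ (Fin n)))).Nonempty}
        {F' | IsFaceOf (P ∩ (U : Set (EuclideanSpace ℝ (Fin n)))) F' ∧
          setDim F' = n - g - 1} := by
  subst hP
  exact ⟨exists_finset_convexHull_inter_eq_convexHull S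
      (A := U.toAffineSubspace) U.closed_of_finiteDimensional,
    stmt7_general (convex_convexHull ℝ _) (isBounded_convexHull.2 S.finite_toSet.isBounded) hint
      U.toAffineSubspace (by rw [U.toAffineSubspace_direction, hU]) (by lia) hPU
      (by rwa [U.toAffineSubspace_direction])⟩
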